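/- arXiv:1201.6110 — 4 statements merged into one kernel-verified Lean document; each statement's English description precedes it below -/
import Mathlib

section
/- Let n be a natural number, R = MvPolynomial (Fin n) ℂ, and f ∈ R. Write (f) = Ideal.span {f} and let J = Ideal.span ({f} ∪ { pderiv i f | i : Fin n }) be the ideal generated by f and all its partial derivatives. Then the sequence of R-modules 0 → Der(−log f) → Derivation ℂ R R → R ⧸ (f) → R ⧸ J → 0 is exact, where the first map is the submodule inclusion, the second map sends a derivation θ to the class of θ f modulo (f), and the third map is the natural quotient projection induced by (f) ≤ J. Exactness means: the inclusion is injective; the kernel of θ ↦ θ f mod (f) is exactly Der(−log f); the image of θ ↦ θ f mod (f) is exactly the kernel J/(f) of the projection R ⧸ (f) → R ⧸ J; and the projection R ⧸ (f) → R ⧸ J is surjective. -/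
open MvPolynomial

/-- Evaluation of a derivation at a fixed element `f`, as an `R`-linear map. -/
noncomputable def derEval {R : Type*} [CommRing R] [Algebra ℂ R] (f : R) :
    Derivation ℂ R R →ₗ[R] R where
  toFun θ := θ f
  map_add' _ _ := Derivation.add_apply f
  map_smul' r θ := Derivation.smul_apply f r θ

/-- The module of logarithmic derivations `Der(−log f)`:
the `R`-submodule of derivations `θ` with `θ f ∈ (f)`. -/
noncomputable def logDer {R : Type*} [CommRing R] [Algebra ℂ R] (f : R) :
    Submodule R (Derivation ℂ R R) :=
  Submodule.comap (derEval f) (Ideal.span {f})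

/-!
By the chain rule `θ f = ∑ i, θ (X i) * ∂f/∂xᵢ`, the values at `f` of all derivations of a
polynomial ring form the ideal of its partial derivatives. Hence the Jacobian ideal `J` is the sum
of `(f)` and the range of `θ ↦ θ f`, and modulo `(f)` this range becomes `J / (f)`, the kernel of
`R ⧸ (f) → R ⧸ J`.
-/

theorem range_mkQ_comp_eq_ker_factor {R M N : Type*} [Ring R] [AddCommGroup M] [Module R M]
    [AddCommGroup N] [Module R N] {p q : Submodule R M} {g : N →ₗ[R] M} (hpq : p ≤ q)
    (hq : q = p ⊔ LinearMap.range g) :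
    LinearMap.range (p.mkQ ∘ₗ g) = LinearMap.ker (Submodule.factor hpq) := by
  rw [LinearMap.range_comp, Submodule.ker_mapQ, Submodule.comap_id, hq, Submodule.map_sup,
    Submodule.mkQ_map_self, bot_sup_eq]

theorem derivation_apply_eq_sum_pderiv_smul {σ R A : Type*} [CommSemiring R] [AddCommMonoid A]
    [Module R A] [Module (MvPolynomial σ R) A] [IsScalarTower R (MvPolynomial σ R) A]
    (D : Derivation R (MvPolynomial σ R) A) (f : MvPolynomial σ R) :
    D f = ∑ i ∈ f.vars, pderiv i f • D (X i) := by
  classical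
  let D' : Derivation R (MvPolynomial σ R) A :=
    ∑ i ∈ f.vars, (LinearMap.toSpanSingleton (MvPolynomial σ R) A (D (X i))).compDer (pderiv i)
  have apply_D' (g : MvPolynomial σ R) : D' g = ∑ i ∈ f.vars, pderiv i g • D (X i) := by
    rw [← Derivation.coeFnAddMonoidHom_apply, map_sum, Finset.sum_apply]
    rfl
  rw [← apply_D']
  refine derivation_eq_of_forall_mem_vars fun j hj ↦ ?_
  simp [apply_D', pderiv_X, Pi.single_apply, ite_smul, hj]

section Algebra

variable {R : Type*} [CommRing R] [Algebra ℂ R]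

theorem ker_mkQ_comp_derEval (f : R) :
    LinearMap.ker ((Ideal.span {f} : Submodule R R).mkQ ∘ₗ derEval f) = logDer f := by
  rw [LinearMap.ker_comp, Submodule.ker_mkQ, logDer]

theorem logDer_exact_of_eq_sup_range_derEval (f : R) {J : Ideal R} (hfJ : Ideal.span {f} ≤ J)
    (hJ : J = Ideal.span {f} ⊔ LinearMap.range (derEval f)) :
    letI φ : Derivation ℂ R R →ₗ[R] R ⧸ Ideal.span {f} :=
      (Ideal.span {f} : Submodule R R).mkQ ∘ₗ derEval f
    letI ψ : (R ⧸ Ideal.span {f}) →ₗ[R] R ⧸ J := Submodule.factor hfJ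
    Function.Injective (logDer f).subtype ∧
      LinearMap.ker φ = logDer f ∧
      LinearMap.range φ = LinearMap.ker ψ ∧
      Function.Surjective ψ :=
  ⟨(logDer f).subtype_injective, ker_mkQ_comp_derEval f, range_mkQ_comp_eq_ker_factor hfJ hJ,
    Submodule.factor_surjective hfJ⟩

end Algebra

theorem range_derEval_eq_span_pderiv {σ : Type*} (f : MvPolynomial σ ℂ) :
    LinearMap.range (derEval f) = Ideal.span (Set.range fun i ↦ pderiv i f) := by
  apply le_antisymm
  · rintro _ ⟨θ, rfl⟩
    change θ f ∈ _
    rw [derivation_apply_eq_sum_pderiv_smul]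
    exact Ideal.sum_mem _ fun i _ ↦ Ideal.mul_mem_right _ _ (Ideal.subset_span ⟨i, rfl⟩)
  · rw [Ideal.span, Submodule.span_le]
    rintro _ ⟨i, rfl⟩
    exact ⟨pderiv i, rfl⟩

theorem logDer_fundamental_exact_sequence_general {σ : Type*}
    (f : MvPolynomial σ ℂ) :
    letI R := MvPolynomial σ ℂ
    letI J : Ideal R := Ideal.span ({f} ∪ { g : R | ∃ i : σ, pderiv i f = g })
    ∀ (hJ : Ideal.span {f} ≤ J),
    letI φ : Derivation ℂ R R →ₗ[R] R ⧸ Ideal.span {f} :=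
      (Ideal.span {f} : Submodule R R).mkQ ∘ₗ derEval f
    letI ψ : (R ⧸ Ideal.span {f}) →ₗ[R] R ⧸ J :=
      Submodule.mapQ (Ideal.span {f} : Submodule R R) (J : Submodule R R) LinearMap.id hJ
    Function.Injective (logDer f).subtype ∧
      LinearMap.ker φ = logDer f ∧
      LinearMap.range φ = LinearMap.ker ψ ∧
      Function.Surjective ψ := by
  intro hJ
  apply logDer_exact_of_eq_sup_range_derEval f hJ
  rw [range_derEval_eq_span_pderiv]
  exact Ideal.span_union _ _

theorem logDer_fundamental_exact_sequence (n : ℕ)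
    (f : MvPolynomial (Fin n) ℂ) :
    letI R := MvPolynomial (Fin n) ℂ
    letI J : Ideal R := Ideal.span ({f} ∪ { g : R | ∃ i : Fin n, pderiv i f = g })
    ∀ (hJ : Ideal.span {f} ≤ J),
    letI φ : Derivation ℂ R R →ₗ[R] R ⧸ Ideal.span {f} :=
      (Ideal.span {f} : Submodule R R).mkQ ∘ₗ derEval f
    letI ψ : (R ⧸ Ideal.span {f}) →ₗ[R] R ⧸ J :=
      Submodule.mapQ (Ideal.span {f} : Submodule R R) (J : Submodule R R) LinearMap.id hJ
    Function.Injective (logDer f).subtype ∧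
      LinearMap.ker φ = logDer f ∧
      LinearMap.range φ = LinearMap.ker ψ ∧
      Function.Surjective ψ :=
  logDer_fundamental_exact_sequence_general f
end

section
/- Let n be a natural number, R = MvPolynomial (Fin n) ℂ, and let f ∈ R be nonzero. Then the module of logarithmic derivations M = Der(−log f) is a reflexive R-module: the natural evaluation map from M to its double dual Module.Dual R (Module.Dual R M) is an isomorphism of R-modules. -/
open MvPolynomial

/-! Let `N = ℓ⁻¹(L) ⊆ M` be the preimage of a reflexive submodule `L ⊆ P` under `ℓ : M → P`, with
`M` reflexive and `P` torsionless. A functional `Φ ∈ N**` induces elements of `M** = M` and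
`L** = L` with the same image in `P**`, hence in `P`; so the element of `M` lies in `N`. It maps
to `Φ` because `N** → M**` is injective as soon as `r • M ⊆ N` for some regular `r`: multiplication
by `r` on `N**` then factors through `M**`. For logarithmic derivations, `ℓ θ = θ f`,
`L = (f) ≅ R` and `r = f`. -/

section DoubleDual

variable {R M N : Type*} [CommSemiring R] [AddCommMonoid M] [Module R M]
  [AddCommMonoid N] [Module R N]

theorem injective_dual_eval_of_injective {j : N →ₗ[R] M} (hj : Function.Injective j)
    (hM : Function.Injective (Module.Dual.eval R M)) :
    Function.Injective (Module.Dual.eval R N) :=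
  .of_comp (f := j.dualMap.dualMap) (hM.comp hj)

theorem injective_dualMap_dualMap_of_comp_eq_smul_id {r : R} (hr : IsRegular r)
    {j : N →ₗ[R] M} {s : M →ₗ[R] N} (hsj : s ∘ₗ j = r • LinearMap.id) :
    Function.Injective j.dualMap.dualMap := by
  have hfactor : ⇑s.dualMap.dualMap ∘ j.dualMap.dualMap = (r • ·) := by
    funext Φ
    ext α
    change Φ (α ∘ₗ s ∘ₗ j) = r • Φ α
    rw [hsj, LinearMap.comp_smul, LinearMap.comp_id, map_smul]
  refine .of_comp (f := s.dualMap.dualMap) ?_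
  rw [hfactor]
  exact hr.isSMulRegular

theorem injective_dualMap_dualMap_subtype {K : Submodule R M} {r : R} (hr : IsRegular r)
    (hK : ∀ x, r • x ∈ K) : Function.Injective K.subtype.dualMap.dualMap :=
  injective_dualMap_dualMap_of_comp_eq_smul_id hr
    (s := (r • LinearMap.id).codRestrict K hK) rfl

theorem isReflexive_comap {P : Type*} [AddCommMonoid P] [Module R P] [Module.IsReflexive R M]
    (ℓ : M →ₗ[R] P) (L : Submodule R P) [Module.IsReflexive R L]
    (hP : Function.Injective (Module.Dual.eval R P)) {r : R} (hr : IsRegular r)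
    (hL : ∀ y, r • y ∈ L) : Module.IsReflexive R (L.comap ℓ) := by
  let ι := (L.comap ℓ).subtype
  let ℓ' : L.comap ℓ →ₗ[R] L := ℓ.restrict fun _ h ↦ h
  refine ⟨injective_dual_eval_of_injective (j := ι) Subtype.val_injective
    (Module.bijective_dual_eval R M).injective, fun Φ ↦ ?_⟩
  obtain ⟨x, hx⟩ := (Module.bijective_dual_eval R M).surjective (ι.dualMap.dualMap Φ)
  obtain ⟨y, hy⟩ := (Module.bijective_dual_eval R L).surjective (ℓ'.dualMap.dualMap Φ)
  have hxy : ℓ x = y := hP <| calc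
    Module.Dual.eval R P (ℓ x) = ℓ.dualMap.dualMap (Module.Dual.eval R M x) := rfl
    _ = ℓ.dualMap.dualMap (ι.dualMap.dualMap Φ) := by rw [hx]
    _ = L.subtype.dualMap.dualMap (ℓ'.dualMap.dualMap Φ) := rfl
    _ = L.subtype.dualMap.dualMap (Module.Dual.eval R L y) := by rw [hy]
    _ = Module.Dual.eval R P y := rfl
  have hx_mem : x ∈ L.comap ℓ := by
    rw [Submodule.mem_comap, hxy]
    exact y.2
  have hι : Function.Injective ι.dualMap.dualMap :=
    injective_dualMap_dualMap_subtype hr fun z ↦ by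
      simpa only [Submodule.mem_comap, map_smul] using hL (ℓ z)
  exact ⟨⟨x, hx_mem⟩, hι hx⟩

end DoubleDual

theorem free_span_singleton {R M : Type*} [Semiring R] [AddCommMonoid M] [Module R M] {x : M}
    (hx : Function.Injective (LinearMap.toSpanSingleton R M x)) :
    Module.Free R (Submodule.span R {x}) :=
  .of_equiv ((LinearEquiv.ofInjective _ hx).trans
    (LinearEquiv.ofEq _ _ (LinearMap.range_toSpanSingleton x)))

theorem isReflexive_derivation (k A : Type*) [CommRing k] [CommRing A] [Algebra k A]
    [Module.IsReflexive A (Ω[A⁄k])] : Module.IsReflexive A (Derivation k A A) :=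
  have : Module.IsReflexive A (Ω[A⁄k] →ₗ[A] A) :=
    inferInstanceAs (Module.IsReflexive A (Module.Dual A (Ω[A⁄k])))
  Module.equiv (KaehlerDifferential.linearMapEquivDerivation k A)

theorem logDer_isReflexive_general {R : Type*} [CommRing R] [Algebra ℂ R]
    [Module.IsReflexive R (Derivation ℂ R R)] {f : R} (hf : IsRegular f) :
    Module.IsReflexive R (logDer f) :=
  have : Module.Free R (Ideal.span {f}) := free_span_singleton hf.right
  isReflexive_comap (derEval f) (Ideal.span {f}) (Module.bijective_dual_eval R R).injective hf
    fun y ↦ Ideal.mul_mem_right y _ (Ideal.mem_span_singleton_self f)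

theorem logDer_isReflexive (n : ℕ) (f : MvPolynomial (Fin n) ℂ) (hf : f ≠ 0) :
    Function.Bijective
      (Module.Dual.eval (MvPolynomial (Fin n) ℂ) (↥(logDer f))) :=
  have := isReflexive_derivation ℂ (MvPolynomial (Fin n) ℂ)
  (logDer_isReflexive_general (IsRegular.of_ne_zero hf)).bijective_dual_eval'
end

section
/- Let R = MvPowerSeries (Fin 2) ℂ be the ring of formal power series in two variables over ℂ, and let f ∈ R be nonzero, a non-unit, and squarefree (Squarefree f). Then the module of logarithmic derivations Der(−log f) is a free R-module of rank 2. -/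
/-! At a point of a smooth surface, a submodule of a finite free module with torsion-free quotient
is free: modulo a regular parameter `x` it embeds in a free module over the discrete valuation
ring `R/(x)`, and freeness lifts from `R/(x)` to `R`. For `f ≠ 0`, the projection `(θ, a) ↦ θ`
identifies `Der(−log f)` with such a submodule of `Der ⊕ R`, the kernel of `(θ, a) ↦ θ f - a f`. Its
rank is that of `Der` because `f · Der ⊆ Der(−log f)`. -/

section FreeSubmodules

variable {R F G H : Type*} [CommRing R] [AddCommGroup F] [Module R F] [AddCommGroup G] [Module R G]
  [AddCommGroup H] [Module R H]

theorem quotSMulTop_map_subtype_injective {K : Submodule R F} {x : R}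
    (hx : IsSMulRegular (F ⧸ K) x) : Function.Injective (QuotSMulTop.map x K.subtype) := by
  have hexact : Function.Exact (QuotSMulTop.map x (0 : K →ₗ[R] K))
      (QuotSMulTop.map x K.subtype) :=
    QuotSMulTop.map_first_exact_on_four_term_exact_of_isSMulRegular_last
      ((LinearMap.exact_zero_iff_injective K K.subtype).2 K.subtype_injective)
      (LinearMap.exact_subtype_mkQ K) hx
  rw [map_zero] at hexact
  exact (LinearMap.exact_zero_iff_injective _ _).1 hexact

theorem isTorsionFree_quotient_ker [Module.IsTorsionFree R G] (φ : F →ₗ[R] G) :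
    Module.IsTorsionFree R (F ⧸ LinearMap.ker φ) :=
  φ.quotKerEquivRange.injective.moduleIsTorsionFree _ (map_smul _)

theorem mem_ker_coprod_neg {φ : F →ₗ[R] G} {ψ : H →ₗ[R] G} {p : F × H} :
    p ∈ LinearMap.ker (φ.coprod (-ψ)) ↔ φ p.1 = ψ p.2 := by
  simp [← sub_eq_add_neg, sub_eq_zero]

/-- The projection to `F` of the fibre product of `φ` and an injective `ψ`, as an isomorphism onto
its image. The fibre product is encoded as the kernel of `(m, a) ↦ φ m - ψ a`. -/
noncomputable def kerCoprodNegEquivComapRange (φ : F →ₗ[R] G) {ψ : H →ₗ[R] G}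
    (hψ : Function.Injective ψ) :
    LinearMap.ker (φ.coprod (-ψ)) ≃ₗ[R] (LinearMap.range ψ).comap φ :=
  LinearEquiv.ofBijective
    ((LinearMap.fst R F H).restrict (q := (LinearMap.range ψ).comap φ)
      fun p hp ↦ ⟨p.2, (mem_ker_coprod_neg.1 hp).symm⟩)
    ⟨by
      rintro ⟨⟨m, a⟩, ha⟩ ⟨⟨m', b⟩, hb⟩ h
      obtain rfl : m = m' := congrArg Subtype.val h
      obtain rfl : a = b := hψ ((mem_ker_coprod_neg.1 ha).symm.trans (mem_ker_coprod_neg.1 hb))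
      rfl,
    fun ⟨m, a, ha⟩ ↦ ⟨⟨(m, a), mem_ker_coprod_neg.2 ha.symm⟩, rfl⟩⟩

section SurfaceLocalRing

variable [IsDomain R] [IsLocalRing R] [IsNoetherianRing R] {x : R}
  [IsPrincipalIdealRing (R ⧸ Ideal.span {x})] [Module.Free R F] [Module.Finite R F]

theorem free_of_isTorsionFree_quotient (hx : Prime x) (K : Submodule R F)
    [Module.IsTorsionFree R (F ⧸ K)] : Module.Free R K := by
  have : (Ideal.span {x}).IsPrime := (Ideal.span_singleton_prime hx.ne_zero).2 hx
  have hxjac : x ∈ (⊥ : Ideal R).jacobson := by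
    rw [IsLocalRing.jacobson_eq_maximalIdeal ⊥ bot_ne_top]
    exact (IsLocalRing.mem_maximalIdeal x).2 hx.not_isUnit
  have hxreg : IsRegular x := IsRegular.of_ne_zero hx.ne_zero
  have : Module.FinitePresentation R K := Module.finitePresentation_of_finite R K
  have : Module.Finite (R ⧸ Ideal.span {x}) (QuotSMulTop x K) :=
    Module.Finite.of_restrictScalars_finite R _ _
  have : Module.IsTorsionFree (R ⧸ Ideal.span {x}) (QuotSMulTop x K) :=
    (quotSMulTop_map_subtype_injective hxreg.isSMulRegular).moduleIsTorsionFree _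
      (Ideal.Quotient.mk_surjective.forall.2 fun r ↦ map_smul (QuotSMulTop.map x K.subtype) r)
  exact (Module.free_quotSMulTop_iff_free R K hxjac hxreg.isSMulRegular).1
    Module.free_of_finite_type_torsion_free'

theorem free_comap_range [Module.Free R H] [Module.Finite R H] [Module.IsTorsionFree R G]
    (hx : Prime x) (φ : F →ₗ[R] G) {ψ : H →ₗ[R] G} (hψ : Function.Injective ψ) :
    Module.Free R ((LinearMap.range ψ).comap φ) :=
  have := isTorsionFree_quotient_ker (φ.coprod (-ψ))
  have := free_of_isTorsionFree_quotient hx (LinearMap.ker (φ.coprod (-ψ)))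
  .of_equiv (kerCoprodNegEquivComapRange φ hψ)

end SurfaceLocalRing

theorem rank_eq_of_forall_smul_mem [IsDomain R] {N : Submodule R F} {a : R} (ha : a ≠ 0)
    (hN : ∀ m, a • m ∈ N) : Module.rank R N = Module.rank R F := by
  have hquot : Module.rank R (F ⧸ N) = 0 := rank_eq_zero_iff.2 fun q ↦ ⟨a, ha, by
    obtain ⟨m, rfl⟩ := N.mkQ_surjective q
    rw [← map_smul]
    exact (Submodule.Quotient.mk_eq_zero N).2 (hN m)⟩
  rw [← rank_quotient_add_rank_of_isDomain N, hquot, zero_add]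

end FreeSubmodules

section LogDer

variable {R : Type*} [CommRing R] [Algebra ℂ R]

theorem logDer_zero : logDer (0 : R) = ⊤ :=
  eq_top_iff.2 fun θ _ ↦ Ideal.mem_span_singleton.2 (map_zero θ).symm.dvd

theorem smul_mem_logDer (f : R) (θ : Derivation ℂ R R) : f • θ ∈ logDer f :=
  Ideal.mem_span_singleton.2 (dvd_mul_right f (θ f))

theorem rank_logDer [IsDomain R] (f : R) :
    Module.rank R (logDer f) = Module.rank R (Derivation ℂ R R) := by
  obtain rfl | hf := eq_or_ne f 0
  · rw [logDer_zero, rank_top]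
  · exact rank_eq_of_forall_smul_mem hf (smul_mem_logDer f)

theorem free_logDer [IsDomain R] [IsLocalRing R] [IsNoetherianRing R]
    [Module.Free R (Derivation ℂ R R)] [Module.Finite R (Derivation ℂ R R)] {x : R}
    (hx : Prime x) [IsPrincipalIdealRing (R ⧸ Ideal.span {x})] (f : R) :
    Module.Free R (logDer f) := by
  obtain rfl | hf := eq_or_ne f 0
  · rw [logDer_zero]
    exact .of_equiv Submodule.topEquiv.symm
  · have hinj : Function.Injective (LinearMap.toSpanSingleton R R f) :=
      fun a b h ↦ mul_right_cancel₀ hf h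
    rw [logDer, ← Ideal.submodule_span_eq, ← LinearMap.range_toSpanSingleton]
    exact free_comap_range hx (derEval f) hinj

end LogDer

section PowerSeriesDerivations

open MvPowerSeries

theorem le_order_sum {σ A ι : Type*} [Semiring A] {s : Finset ι} {g : ι → MvPowerSeries σ A}
    {n : ℕ∞} (h : ∀ i ∈ s, n ≤ (g i).order) : n ≤ (∑ i ∈ s, g i).order :=
  Finset.sum_induction g (fun p ↦ n ≤ order p)
    (fun _ _ h₁ h₂ ↦ (le_min h₁ h₂).trans min_order_le_add) (by simp) h

variable {σ A : Type*} [CommRing A]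

theorem mem_span_X_image_of_coeff_eq_zero {s : Finset σ} {g : MvPowerSeries σ A}
    (hg : ∀ d : σ →₀ ℕ, (∀ i ∈ s, d i = 0) → coeff d g = 0) :
    g ∈ Ideal.span (X '' (s : Set σ)) := by
  classical
  induction s using Finset.induction_on generalizing g with
  | empty =>
    obtain rfl : g = 0 := MvPowerSeries.ext fun d ↦ hg d (by simp)
    exact zero_mem _
  | insert i s _ ih =>
    let h : MvPowerSeries σ A := fun d ↦ if d i = 0 then coeff d g else 0
    have coeff_h (d : σ →₀ ℕ) : coeff d h = if d i = 0 then coeff d g else 0 := rfl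
    have hmem : h ∈ Ideal.span (X '' (s : Set σ)) := ih fun d hd ↦ by
      rw [coeff_h]
      split_ifs with hdi
      · exact hg d (Finset.forall_mem_insert .. |>.2 ⟨hdi, hd⟩)
      · rfl
    have hdvd : X i ∣ g - h := X_dvd_iff.2 fun d hdi ↦ by simp [coeff_h, hdi]
    rw [Finset.coe_insert, Set.image_insert_eq, Ideal.span_insert, ← sub_add_cancel g h]
    exact Submodule.add_mem_sup (Ideal.mem_span_singleton.2 hdvd) hmem

theorem mem_span_range_X_of_constantCoeff_eq_zero [Finite σ] {g : MvPowerSeries σ A}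
    (hg : constantCoeff g = 0) : g ∈ Ideal.span (Set.range X) := by
  have := Fintype.ofFinite σ
  rw [← Set.image_univ, ← Finset.coe_univ]
  refine mem_span_X_image_of_coeff_eq_zero fun d hd ↦ ?_
  obtain rfl : d = 0 := Finsupp.ext fun i ↦ hd i (Finset.mem_univ i)
  exact hg

theorem sum_smul_pderiv_apply_X [Fintype σ] (v : σ → MvPowerSeries σ A) (j : σ) :
    (∑ i, v i • pderiv A i) (X j) = v j := by
  classical
  calc
    (∑ i, v i • pderiv A i) (X j) = ∑ i, v i * pderiv A i (X j) :=
        map_sum ((Pi.evalAddMonoidHom _ (X j)).comp Derivation.coeFnAddMonoidHom) _ _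
    _ = v j := by simp [pderiv_X, Pi.single_apply]

variable [Finite σ] {δ δ' : Derivation A (MvPowerSeries σ A) (MvPowerSeries σ A)}

theorem le_order_of_derivation_X_eq_zero (hδ : ∀ i, δ (X i) = 0) (n : ℕ) (g : MvPowerSeries σ A) :
    n ≤ (δ g).order := by
  induction n generalizing g with
  | zero => simp
  | succ n ih =>
    have hconst : δ g = δ (g - C (constantCoeff g)) := by
      have hC : δ (C (constantCoeff g)) = 0 := δ.map_algebraMap (constantCoeff g)
      rw [map_sub, hC, sub_zero]
    have hmem : g - C (constantCoeff g) ∈ Ideal.span (Set.range X) :=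
      mem_span_range_X_of_constantCoeff_eq_zero (by simp)
    have := Fintype.ofFinite σ
    obtain ⟨c, hc⟩ := Ideal.mem_span_range_iff_exists_fun.1 hmem
    have hsum : δ g = ∑ i, X i * δ (c i) := by
      rw [hconst, ← hc, map_sum]
      simp [hδ]
    rw [hsum]
    refine le_order_sum fun i _ ↦ ?_
    have hX : 1 ≤ (X i : MvPowerSeries σ A).order :=
      one_le_order_iff_constCoeff_eq_zero.2 (constantCoeff_X i)
    have hle : ((n + 1 : ℕ) : ℕ∞) ≤ (X i : MvPowerSeries σ A).order + (δ (c i)).order := by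
      rw [Nat.cast_succ, add_comm]
      exact add_le_add hX (ih (c i))
    exact hle.trans le_order_mul

theorem derivation_ext_X (h : ∀ i, δ (X i) = δ' (X i)) : δ = δ' := by
  rw [← sub_eq_zero]
  ext1 g
  refine order_eq_top_iff.1 (ENat.eq_top_iff_forall_ge.2 fun n ↦ ?_)
  exact le_order_of_derivation_X_eq_zero (fun i ↦ by simp [h]) n g

/-- A derivation of `A⟦X_i | i ∈ σ⟧` corresponds to its values on the variables; the inverse sends
`v` to `∑ i, v i • ∂/∂X_i`. -/
noncomputable def derivationEquivFun (σ A : Type*) [Fintype σ] [CommRing A] :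
    Derivation A (MvPowerSeries σ A) (MvPowerSeries σ A)
      ≃ₗ[MvPowerSeries σ A] (σ → MvPowerSeries σ A) where
  toFun δ i := δ (X i)
  map_add' _ _ := rfl
  map_smul' _ _ := rfl
  invFun v := ∑ i, v i • pderiv A i
  left_inv δ := derivation_ext_X fun j ↦ sum_smul_pderiv_apply_X (fun i ↦ δ (X i)) j
  right_inv v := funext (sum_smul_pderiv_apply_X v)

end PowerSeriesDerivations

section RestrictionToHyperplane

open MvPowerSeries

variable (A : Type*) [CommRing A] (n : ℕ)

theorem prime_X_zero [IsDomain A] : Prime (X 0 : MvPowerSeries (Fin (n + 1)) A) := by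
  have : IsDomain (MvPowerSeries (Fin n) A) := NoZeroDivisors.to_isDomain _
  rw [← MulEquiv.prime_iff (finSuccEquiv A n), finSuccEquiv_X_zero]
  exact PowerSeries.X_prime

/-- Restriction of power series to the coordinate hyperplane `X 0 = 0`. -/
noncomputable def restrictXZero : MvPowerSeries (Fin (n + 1)) A →+* MvPowerSeries (Fin n) A :=
  PowerSeries.constantCoeff.comp (finSuccEquiv A n : _ →+* _)

theorem restrictXZero_surjective : Function.Surjective (restrictXZero A n) :=
  PowerSeries.constantCoeff_surj.comp (finSuccEquiv A n).surjective

theorem ker_restrictXZero : RingHom.ker (restrictXZero A n) = Ideal.span {X 0} := by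
  ext g
  rw [RingHom.mem_ker, Ideal.mem_span_singleton, ← map_dvd_iff (finSuccEquiv A n),
    finSuccEquiv_X_zero, PowerSeries.X_dvd_iff]
  rfl

/-- `A⟦X₀, …, Xₙ⟧/(X₀) ≃ A⟦X₁, …, Xₙ⟧`. -/
noncomputable def quotientSpanXZeroEquiv :
    (MvPowerSeries (Fin (n + 1)) A ⧸ Ideal.span {(X 0 : MvPowerSeries (Fin (n + 1)) A)}) ≃+*
      MvPowerSeries (Fin n) A :=
  (Ideal.quotEquivOfEq (ker_restrictXZero A n).symm).trans
    (RingHom.quotientKerEquivOfSurjective (restrictXZero_surjective A n))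

theorem isPrincipalIdealRing_quotient_span_X_zero (k : Type*) [Field k] :
    IsPrincipalIdealRing
      (MvPowerSeries (Fin 2) k ⧸ Ideal.span {(X 0 : MvPowerSeries (Fin 2) k)}) :=
  let e : PowerSeries k ≃+* MvPowerSeries (Fin 1) k :=
    (renameEquiv k (Equiv.ofUnique Unit (Fin 1))).toRingEquiv
  let e' := e.trans (quotientSpanXZeroEquiv k 1).symm
  .of_surjective e' e'.surjective

end RestrictionToHyperplane

theorem logDer_free_rank_two_of_squarefree_powerSeries_general (f : MvPowerSeries (Fin 2) ℂ) :
    Module.Free (MvPowerSeries (Fin 2) ℂ) (logDer f) ∧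
      Module.rank (MvPowerSeries (Fin 2) ℂ) (logDer f) = 2 := by
  have : IsDomain (MvPowerSeries (Fin 2) ℂ) := NoZeroDivisors.to_isDomain _
  have := isPrincipalIdealRing_quotient_span_X_zero ℂ
  let e := derivationEquivFun (Fin 2) ℂ
  have : Module.Free (MvPowerSeries (Fin 2) ℂ) (Derivation ℂ _ _) := .of_equiv e.symm
  have : Module.Finite (MvPowerSeries (Fin 2) ℂ) (Derivation ℂ _ _) := .equiv e.symm
  refine ⟨free_logDer (prime_X_zero ℂ 1) f, ?_⟩
  rw [rank_logDer, e.rank_eq, rank_fin_fun, Nat.cast_ofNat]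

theorem logDer_free_rank_two_of_squarefree_powerSeries
    (f : MvPowerSeries (Fin 2) ℂ) (hf0 : f ≠ 0) (hfu : ¬ IsUnit f)
    (hsq : Squarefree f) :
    Module.Free (MvPowerSeries (Fin 2) ℂ) (↥(logDer f)) ∧
      Module.rank (MvPowerSeries (Fin 2) ℂ) (↥(logDer f)) = 2 :=
  logDer_free_rank_two_of_squarefree_powerSeries_general f
end

section
/- Let R = MvPolynomial (Fin 2) ℂ be the polynomial ring in two variables over ℂ, and let f ∈ R be a nonconstant squarefree polynomial. Then the module of logarithmic derivations Der(−log f) is a finitely generated projective R-module (equivalently, it is locally free of rank 2 at every prime of R). -/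
/-!
The module `Der(−log f)` is the kernel of `θ ↦ θ f`, viewed as a map from the derivations of `R` to
`R ⧸ (f)`. On a smooth surface the derivations form a projective module and, by the Hilbert syzygy
theorem in the case of the affine plane, every `R`-module has projective dimension at most two.
Since `(f)` is free, `R ⧸ (f)` has projective dimension at most one, hence so does every submodule
of it; in particular the image of `θ ↦ θ f` does, and therefore the kernel is projective.

The syzygy theorem comes from the characteristic sequence
`0 → R[X] ⊗ M → R[X] ⊗ M → M → 0` of an `R[X]`-module `M`, whose left-hand map
`X ⊗ 1 - 1 ⊗ X` is split over `R` by synthetic division.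
-/

open MvPolynomial

universe u

section CharacteristicSequence

open scoped Polynomial TensorProduct

-- The ambient `open MvPolynomial` makes a bare `X` ambiguous.
local notation "X" => Polynomial.X

lemma polynomial_tensorProduct_hom_ext {R M N : Type*} [CommRing R] [AddCommGroup M] [Module R M]
    [AddCommGroup N] [Module R N] {φ ψ : R[X] ⊗[R] M →ₗ[R] N}
    (h : ∀ (n : ℕ) (m : M), φ ((X ^ n : R[X]) ⊗ₜ m) = ψ ((X ^ n : R[X]) ⊗ₜ m)) : φ = ψ := by
  refine TensorProduct.ext ((Polynomial.basisMonomials R).ext fun n ↦ LinearMap.ext fun m ↦ ?_)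
  simpa [Polynomial.monomial_one_right_eq_X_pow] using h n m

variable (R M : Type*) [CommRing R] [AddCommGroup M] [Module R M] [Module R[X] M]
  [IsScalarTower R R[X] M]

/-- The augmentation `p ⊗ m ↦ p • m` of the characteristic sequence of an `R[X]`-module `M`. -/
noncomputable def polynomialAction : R[X] ⊗[R] M →ₗ[R[X]] M :=
  LinearMap.liftBaseChange R[X] LinearMap.id

/-- The map `X ⊗ 1 - 1 ⊗ X` of the characteristic sequence of an `R[X]`-module `M`; for `M = Rⁿ`
it is the characteristic matrix of the endomorphism `X` of `M`. -/
noncomputable def characteristicMap : R[X] ⊗[R] M →ₗ[R[X]] R[X] ⊗[R] M :=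
  (X : R[X]) • LinearMap.id - (Algebra.lsmul R R M (X : R[X])).baseChange R[X]

/-- The quotient in the division by `X ⊗ 1 - 1 ⊗ X`, given on monomials by the expansion of
`(Xⁿ ⊗ 1 - 1 ⊗ Xⁿ) / (X ⊗ 1 - 1 ⊗ X)` as a geometric sum. It is only `R`-linear. -/
noncomputable def syntheticDivision : R[X] ⊗[R] M →ₗ[R] R[X] ⊗[R] M :=
  TensorProduct.lift <| (Polynomial.basisMonomials R).constr R fun n ↦
    ∑ i ∈ Finset.range n, TensorProduct.mk R R[X] M (X ^ i) ∘ₗ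
      Algebra.lsmul R R M (X ^ (n - 1 - i) : R[X])

variable {R M}

lemma polynomialAction_tmul (p : R[X]) (m : M) : polynomialAction R M (p ⊗ₜ m) = p • m :=
  LinearMap.liftBaseChange_tmul ..

lemma characteristicMap_tmul (p : R[X]) (m : M) :
    characteristicMap R M (p ⊗ₜ m) = (X * p) ⊗ₜ m - p ⊗ₜ ((X : R[X]) • m) := by
  simp [characteristicMap, TensorProduct.smul_tmul']

lemma syntheticDivision_X_pow_tmul (n : ℕ) (m : M) :
    syntheticDivision R M ((X ^ n : R[X]) ⊗ₜ m) =
      ∑ i ∈ Finset.range n, (X ^ i : R[X]) ⊗ₜ[R] ((X ^ (n - 1 - i) : R[X]) • m) := by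
  have hn : (X ^ n : R[X]) = Polynomial.basisMonomials R n := by
    simp only [Polynomial.coe_basisMonomials, Polynomial.monomial_one_right_eq_X_pow]
  rw [syntheticDivision, TensorProduct.lift.tmul, hn, Module.Basis.constr_basis,
    LinearMap.sum_apply]
  rfl

lemma syntheticDivision_characteristicMap (t : R[X] ⊗[R] M) :
    syntheticDivision R M (characteristicMap R M t) = t := by
  suffices syntheticDivision R M ∘ₗ (characteristicMap R M).restrictScalars R = LinearMap.id from
    LinearMap.congr_fun this t
  refine polynomial_tensorProduct_hom_ext fun n m ↦ ?_
  have shift : ∀ i ∈ Finset.range n,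
      (X ^ i : R[X]) ⊗ₜ[R] ((X ^ (n - 1 - i) : R[X]) • (X : R[X]) • m) =
        (X ^ i : R[X]) ⊗ₜ[R] ((X ^ (n - i) : R[X]) • m) := fun i hi ↦ by
    rw [smul_smul, ← pow_succ, show n - 1 - i + 1 = n - i by grind]
  rw [LinearMap.comp_apply, LinearMap.restrictScalars_apply, characteristicMap_tmul, map_sub,
    ← pow_succ', syntheticDivision_X_pow_tmul, syntheticDivision_X_pow_tmul,
    Finset.sum_congr rfl shift, Finset.sum_range_succ]
  simp

lemma characteristicMap_syntheticDivision (t : R[X] ⊗[R] M) :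
    characteristicMap R M (syntheticDivision R M t) = t - 1 ⊗ₜ polynomialAction R M t := by
  suffices (characteristicMap R M).restrictScalars R ∘ₗ syntheticDivision R M =
      LinearMap.id - TensorProduct.mk R R[X] M 1 ∘ₗ (polynomialAction R M).restrictScalars R from
    LinearMap.congr_fun this t
  refine polynomial_tensorProduct_hom_ext fun n m ↦ ?_
  let term (i : ℕ) : R[X] ⊗[R] M := (X ^ i : R[X]) ⊗ₜ ((X ^ (n - i) : R[X]) • m)
  have telescope : ∀ i ∈ Finset.range n,
      characteristicMap R M ((X ^ i : R[X]) ⊗ₜ[R] ((X ^ (n - 1 - i) : R[X]) • m)) =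
        term (i + 1) - term i := fun i hi ↦ by
    rw [characteristicMap_tmul, smul_smul, ← pow_succ', ← pow_succ',
      show n - 1 - i + 1 = n - i by grind, show n - 1 - i = n - (i + 1) by grind]
  calc characteristicMap R M (syntheticDivision R M ((X ^ n : R[X]) ⊗ₜ m))
    _ = term n - term 0 := by
      rw [syntheticDivision_X_pow_tmul, map_sum, Finset.sum_congr rfl telescope,
        Finset.sum_range_sub]
    _ = (X ^ n : R[X]) ⊗ₜ m - 1 ⊗ₜ polynomialAction R M ((X ^ n : R[X]) ⊗ₜ m) := by
      simp [term, polynomialAction_tmul]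

lemma characteristicMap_injective : Function.Injective (characteristicMap R M) :=
  Function.LeftInverse.injective syntheticDivision_characteristicMap

lemma polynomialAction_surjective : Function.Surjective (polynomialAction R M) := fun m ↦
  ⟨1 ⊗ₜ m, by rw [polynomialAction_tmul, one_smul]⟩

lemma exact_characteristicMap_polynomialAction :
    Function.Exact (characteristicMap R M) (polynomialAction R M) := by
  refine LinearMap.exact_of_comp_of_mem_range ?_ fun t ht ↦ ⟨syntheticDivision R M t, ?_⟩
  · ext m
    simp [characteristicMap_tmul, polynomialAction_tmul]
  · rw [characteristicMap_syntheticDivision, ht, TensorProduct.tmul_zero, sub_zero]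

end CharacteristicSequence

section ProjectiveDimension

open CategoryTheory

variable {R : Type u} [CommRing R] {L M N : Type u} [AddCommGroup L] [Module R L]
  [AddCommGroup M] [Module R M] [AddCommGroup N] [Module R N]

lemma shortExact_shortComplexOfCompEqZero {i : L →ₗ[R] M} {p : M →ₗ[R] N}
    (exact : Function.Exact i p) (inj : Function.Injective i) (surj : Function.Surjective p) :
    (ModuleCat.shortComplexOfCompEqZero i p exact.linearMap_comp_eq_zero).ShortExact :=
  ModuleCat.shortComplex_shortExact _ exact inj surj

lemma shortExact_subtype_mkQ (L : Submodule R N) :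
    (ModuleCat.shortComplexOfCompEqZero L.subtype L.mkQ
      (LinearMap.exact_subtype_mkQ L).linearMap_comp_eq_zero).ShortExact :=
  shortExact_shortComplexOfCompEqZero (LinearMap.exact_subtype_mkQ L)
    L.injective_subtype L.mkQ_surjective

lemma module_projective_iff_hasProjectiveDimensionLE_zero :
    Module.Projective R M ↔ HasProjectiveDimensionLE (ModuleCat.of R M) 0 := by
  rw [IsProjective.iff_projective, projective_iff_hasProjectiveDimensionLE_zero]

lemma hasProjectiveDimensionLE_quotient (L : Submodule R N) (n : ℕ)
    [HasProjectiveDimensionLE (ModuleCat.of R L) n]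
    [HasProjectiveDimensionLE (ModuleCat.of R N) (n + 1)] :
    HasProjectiveDimensionLE (ModuleCat.of R (N ⧸ L)) (n + 1) :=
  (shortExact_subtype_mkQ L).hasProjectiveDimensionLT_X₃ (n + 1) ‹_› ‹_›

lemma hasProjectiveDimensionLE_baseChange (S : Type u) [CommRing S] [Algebra R S]
    [Module.Flat R S] (M : ModuleCat.{u} R) (n : ℕ) [HasProjectiveDimensionLE M n] :
    HasProjectiveDimensionLE (ModuleCat.of S (TensorProduct R S M)) n := by
  induction n generalizing M with
  | zero =>
    have : Module.Projective R M :=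
      module_projective_iff_hasProjectiveDimensionLE_zero.mpr ‹_›
    exact module_projective_iff_hasProjectiveDimensionLE_zero.mp inferInstance
  | succ n ih =>
    let T := M.projectiveShortComplex
    have hT : T.ShortExact := M.shortExact_projectiveShortComplex
    have : HasProjectiveDimensionLE T.X₁ n :=
      (hT.hasProjectiveDimensionLT_X₃_iff n inferInstance).mp ‹_›
    have hT_exact : Function.Exact T.f T.g :=
      (ShortComplex.ShortExact.moduleCat_exact_iff_function_exact T).mp hT.exact
    have hST := shortExact_shortComplexOfCompEqZero
      (i := T.f.hom.baseChange S) (p := T.g.hom.baseChange S)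
      (Module.Flat.lTensor_exact S hT_exact)
      (Module.Flat.lTensor_preserves_injective_linearMap _ hT.moduleCat_injective_f)
      (LinearMap.lTensor_surjective S hT.moduleCat_surjective_g)
    have : Module.Projective R T.X₂ := inferInstance
    exact (hST.hasProjectiveDimensionLT_X₃_iff n
      ((IsProjective.iff_projective _).mp inferInstance)).mpr (ih T.X₁)

lemma projective_span_singleton {R : Type*} [CommRing R] [IsDomain R] (f : R) :
    Module.Projective R (Ideal.span {f}) := by
  rcases eq_or_ne f 0 with rfl | hf
  · rw [Ideal.span_singleton_zero]
    infer_instance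
  · exact .of_equiv (LinearEquiv.toSpanNonzeroSingleton R R f hf)

end ProjectiveDimension

open CategoryTheory in
/-- The ring `R` has global dimension at most `n`: all `R`-modules have projective dimension
at most `n`. The modules range over the universe of `R`. -/
class HasGlobalDimensionLE (R : Type u) [CommRing R] (n : ℕ) : Prop where
  hasProjectiveDimensionLE (M : ModuleCat.{u} R) : HasProjectiveDimensionLE M n

namespace HasGlobalDimensionLE

open CategoryTheory

instance of_field (K : Type u) [Field K] : HasGlobalDimensionLE K 0 where
  hasProjectiveDimensionLE _ :=
    module_projective_iff_hasProjectiveDimensionLE_zero.mp inferInstance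

attribute [local instance] RingHomInvPair.of_ringEquiv in
lemma of_ringEquiv {R S : Type u} [CommRing R] [CommRing S] (e : R ≃+* S) (n : ℕ)
    [HasGlobalDimensionLE R n] : HasGlobalDimensionLE S n where
  hasProjectiveDimensionLE M := by
    let := Module.compHom M e.toRingHom
    let restrictEquiv : ModuleCat.of R M ≃ₛₗ[RingHomClass.toRingHom e] M :=
      { AddEquiv.refl M with map_smul' := fun _ _ ↦ rfl }
    have := hasProjectiveDimensionLE (n := n) (ModuleCat.of R M)
    exact ModuleCat.hasProjectiveDimensionLE_of_semiLinearEquiv e restrictEquiv n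

instance polynomial (R : Type u) [CommRing R] (n : ℕ) [HasGlobalDimensionLE R n] :
    HasGlobalDimensionLE (Polynomial R) (n + 1) where
  hasProjectiveDimensionLE M := by
    let := Module.compHom M (Polynomial.C : R →+* Polynomial R)
    have : IsScalarTower R (Polynomial R) M := ⟨fun a p m ↦ by
      rw [Polynomial.smul_eq_C_mul, mul_smul]
      rfl⟩
    have := hasProjectiveDimensionLE (n := n) (ModuleCat.of R M)
    have extended : HasProjectiveDimensionLE
        (ModuleCat.of (Polynomial R) (TensorProduct R (Polynomial R) M)) n :=
      hasProjectiveDimensionLE_baseChange (Polynomial R) (ModuleCat.of R M) n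
    have characteristicSequence := shortExact_shortComplexOfCompEqZero
      (exact_characteristicMap_polynomialAction (R := R) (M := M))
      characteristicMap_injective polynomialAction_surjective
    exact characteristicSequence.hasProjectiveDimensionLT_X₃ (n + 1) extended
      (hasProjectiveDimensionLT_of_ge _ (n + 1) _ (Nat.le_succ _))

theorem mvPolynomial (R : Type u) [CommRing R] (n : ℕ) [HasGlobalDimensionLE R n] (d : ℕ) :
    HasGlobalDimensionLE (MvPolynomial (Fin d) R) (n + d) := by
  induction d with
  | zero => exact of_ringEquiv (isEmptyRingEquiv R (Fin 0)).symm n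
  | succ d ih => exact of_ringEquiv (finSuccEquiv R d).symm.toRingEquiv (n + d + 1)

instance mvPolynomial_of_field (K : Type u) [Field K] (d : ℕ) :
    HasGlobalDimensionLE (MvPolynomial (Fin d) K) d := by
  simpa only [zero_add] using mvPolynomial K 0 d

variable {R : Type u} [CommRing R] {M N : Type u} [AddCommGroup M] [Module R M]
  [AddCommGroup N] [Module R N]

lemma hasProjectiveDimensionLE_submodule (n : ℕ) [HasGlobalDimensionLE R (n + 1)]
    [HasProjectiveDimensionLE (ModuleCat.of R N) n] (L : Submodule R N) :
    HasProjectiveDimensionLE (ModuleCat.of R L) n :=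
  (shortExact_subtype_mkQ L).hasProjectiveDimensionLT_X₁ (n + 1) ‹_›
    (hasProjectiveDimensionLE (n := n + 1) (ModuleCat.of R (N ⧸ L)))

lemma hasProjectiveDimensionLE_ker (n : ℕ) [HasGlobalDimensionLE R (n + 2)]
    [HasProjectiveDimensionLE (ModuleCat.of R M) n]
    [HasProjectiveDimensionLE (ModuleCat.of R N) (n + 1)] (g : M →ₗ[R] N) :
    HasProjectiveDimensionLE (ModuleCat.of R (LinearMap.ker g)) n := by
  have := hasProjectiveDimensionLE_submodule (n + 1) (LinearMap.range g)
  rw [← g.ker_rangeRestrict]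
  exact (LinearMap.shortExact_shortComplexKer
    g.surjective_rangeRestrict).hasProjectiveDimensionLT_X₁ (n + 1) ‹_› ‹_›

end HasGlobalDimensionLE

lemma logDer_eq_ker {R : Type*} [CommRing R] [Algebra ℂ R] (f : R) :
    logDer f = LinearMap.ker ((Ideal.span {f}).mkQ ∘ₗ derEval f) := by
  rw [LinearMap.ker_comp, Submodule.ker_mkQ, logDer]

theorem logDer_finite_projective_of_squarefree_plane_curve_general
    {R : Type u} [CommRing R] [IsDomain R] [Algebra ℂ R] [Algebra.FiniteType ℂ R]
    [Module.Projective R (Ω[R⁄ℂ])] [HasGlobalDimensionLE R 2] (f : R) :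
    Module.Finite R (logDer f) ∧ Module.Projective R (logDer f) := by
  have : IsNoetherianRing R := Algebra.FiniteType.isNoetherianRing ℂ R
  let dualKaehler : Module.Dual R (Ω[R⁄ℂ]) ≃ₗ[R] Derivation ℂ R R :=
    KaehlerDifferential.linearMapEquivDerivation ℂ R
  have : Module.Finite R (Derivation ℂ R R) := .equiv dualKaehler
  have : Module.Projective R (Derivation ℂ R R) := .of_equiv dualKaehler
  have := projective_span_singleton f
  have := hasProjectiveDimensionLE_quotient (Ideal.span {f}) 0
  refine ⟨inferInstance, ?_⟩
  rw [logDer_eq_ker, module_projective_iff_hasProjectiveDimensionLE_zero]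
  exact HasGlobalDimensionLE.hasProjectiveDimensionLE_ker 0 _

theorem logDer_finite_projective_of_squarefree_plane_curve
    (f : MvPolynomial (Fin 2) ℂ) (hconst : ∀ c : ℂ, f ≠ C c)
    (hsq : Squarefree f) :
    Module.Finite (MvPolynomial (Fin 2) ℂ) (↥(logDer f)) ∧
      Module.Projective (MvPolynomial (Fin 2) ℂ) (↥(logDer f)) := by
  exact logDer_finite_projective_of_squarefree_plane_curve_general f
end
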